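/- arXiv:2410.07942 — 3 statements merged into one kernel-verified Lean document; each statement's English description precedes it below -/
import Mathlib

section
/- Let F be a field in which the squaring map is not surjective. Let M be a linear subspace of Mat_n(F) in which every matrix is triangularizable over F, and suppose M is spanned by matrices of rank 1 and trace 0. Then dim M ≤ n²/2. -/
/-- A square matrix is triangularizable over the ground field when it is
similar over that field to an upper triangular matrix. -/
def Matrix.Triangularizable {n : ℕ} {F : Type*} [Field F]
    (M : Matrix (Fin n) (Fin n) F) : Prop :=
  ∃ P : (Matrix (Fin n) (Fin n) F)ˣ,
    ((P : Matrix (Fin n) (Fin n) F) * M * ((P⁻¹ : (Matrix (Fin n) (Fin n) F)ˣ) :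
      Matrix (Fin n) (Fin n) F)).BlockTriangular id

lemma rank_one_form {F : Type*} [Field F] {n : ℕ} (A : Matrix (Fin n) (Fin n) F)
    (h : A.rank ≤ 1) : ∃ u v : Fin n → F, A = Matrix.vecMulVec u v := by
  unfold Matrix.rank at h
  obtain ⟨u, hu⟩ := (finrank_le_one_iff).1 h
  choose c hc using hu
  refine ⟨u, fun j => c ⟨A.mulVecLin (Pi.single j 1), LinearMap.mem_range_self _ _⟩, ?_⟩
  ext i j
  have h1 := congrFun (congrArg Subtype.val
    (hc ⟨A.mulVecLin (Pi.single j 1), LinearMap.mem_range_self _ _⟩)) i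
  simp [Matrix.vecMulVec] at h1 ⊢
  rw [← h1, mul_comm]

lemma sandwich {F : Type*} [Field F] {n : ℕ} (A B : Matrix (Fin n) (Fin n) F)
    (h : A.rank ≤ 1) : A * B * A = (A * B).trace • A := by
  obtain ⟨u, v, rfl⟩ := rank_one_form A h
  rw [Matrix.vecMulVec_mul, Matrix.vecMulVec_mul_vecMulVec, Matrix.trace_vecMulVec]
  ext i j
  simp [Matrix.vecMulVec_apply, dotProduct_comm]
  try ring

lemma sq_zero {F : Type*} [Field F] {n : ℕ} (A : Matrix (Fin n) (Fin n) F)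
    (h : A.rank ≤ 1) (ht : A.trace = 0) : A * A = 0 := by
  have := sandwich A 1 h
  simpa [ht] using this

lemma diag_mul {F : Type*} [Field F] {n : ℕ} (S T : Matrix (Fin n) (Fin n) F)
    (hS : S.BlockTriangular id) (hT : T.BlockTriangular id) (i : Fin n) :
    (S * T) i i = S i i * T i i := by
  rw [Matrix.mul_apply, Finset.sum_eq_single i]
  · intro j _ hj
    rcases lt_or_gt_of_ne hj with h | h
    · rw [hS h, zero_mul]
    · rw [hT h, mul_zero]
  · simp

lemma cube_zero {F : Type*} [Field F] {n : ℕ} (c : F) (hc : ¬ ∃ x, x ^ 2 = c)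
    (T : Matrix (Fin n) (Fin n) F) (hT : T.BlockTriangular id)
    (h : T * T * T = c • T) : T = 0 := by
  have hd : ∀ i, T i i = 0 := by
    intro i
    have h1 := congrFun (congrFun h i) i
    rw [diag_mul _ _ (hT.mul hT) hT, diag_mul _ _ hT hT, Matrix.smul_apply, smul_eq_mul] at h1
    by_contra h0
    exact hc ⟨T i i, by rw [sq]; exact mul_right_cancel₀ h0 h1⟩
  have hc0 : c ≠ 0 := fun h0 => hc ⟨0, by simp [h0]⟩
  have hch : T ^ n = 0 := by
    have h2 := Matrix.charpoly_of_isUpperTriangular T hT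
    have h3 := Matrix.aeval_self_charpoly T
    rw [h2] at h3
    simpa [hd] using h3
  have hk : ∀ k : ℕ, T ^ (2 * k + 1) = c ^ k • T := by
    intro k
    induction k with
    | zero => simp
    | succ k ih =>
      have : 2 * (k + 1) + 1 = (2 * k + 1) + 2 := by ring
      rw [this, pow_add, ih, sq, smul_mul_assoc, ← mul_assoc, h, smul_smul, pow_succ]
  have h4 := hk n
  rw [show 2 * n + 1 = n + (n + 1) by ring, pow_add, hch, zero_mul] at h4
  exact (smul_eq_zero.1 h4.symm).resolve_left (pow_ne_zero _ hc0)

lemma trace_mul_zero {F : Type*} [Field F]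
    (hNRC : ¬ Function.Surjective fun x : F => x ^ 2) {n : ℕ}
    (A B : Matrix (Fin n) (Fin n) F) (hA : A.rank ≤ 1) (hB : B.rank ≤ 1)
    (hA0 : A.trace = 0) (hB0 : B.trace = 0)
    (h : ∀ t : F, (A + t • B).Triangularizable) : (A * B).trace = 0 := by
  by_contra hne
  simp only [Function.Surjective, not_forall] at hNRC
  obtain ⟨c, hc⟩ := hNRC
  have hc0 : c ≠ 0 := fun h0 => hc ⟨0, by simp [h0]⟩
  set τ := (A * B).trace with hτ
  set t := c / τ with ht
  have htτ : t * τ = c := by rw [ht]; field_simp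
  have hAA := sq_zero A hA hA0
  have hBB := sq_zero B hB hB0
  have hABA := sandwich A B hA
  have hBAB := sandwich B A hB
  rw [Matrix.trace_mul_comm] at hBAB
  set C := A + t • B with hC
  have hCCC : C * C * C = c • C := by
    have : C * C * C = t • (A * B * A) + (t * t) • (B * A * B) + (A * A) * A + t • ((A * A) * B)
       + t • (B * (A * A)) + (t * t) • (A * (B * B)) + (t * t) • ((B * B) * A)
       + (t * t * t) • ((B * B) * B) := by
      simp only [hC, add_mul, mul_add, smul_mul_assoc, mul_smul_comm, smul_add, smul_smul, mul_assoc]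
      abel
    rw [this, hAA, hBB, hABA, hBAB, ← hτ, smul_smul, smul_smul, mul_assoc, htτ]
    simp [hC, smul_add, smul_smul, mul_comm]
  obtain ⟨P, hP⟩ := h t
  rw [← hC] at hP
  have hT := cube_zero c hc _ hP (by
    have : (P.val * C * P⁻¹.val) * (P.val * C * P⁻¹.val) * (P.val * C * P⁻¹.val)
      = P.val * (C * C * C) * P⁻¹.val := by simp [mul_assoc]
    rw [this, hCCC]; simp)
  have hC0 : C = 0 := by
    have h6 : P⁻¹.val * (P.val * C * P⁻¹.val) * P.val = C := by
      rw [mul_assoc P.val, Units.inv_mul_cancel_left, mul_assoc, Units.inv_mul, mul_one]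
    rw [← h6, hT, mul_zero, zero_mul]
  have h5 : (A * C).trace = 0 := by simp [hC0]
  rw [hC, mul_add, hAA, zero_add, mul_smul_comm, Matrix.trace_smul, ← hτ, smul_eq_mul, htτ] at h5
  exact hc0 h5

theorem stmt_1 {F : Type*} [Field F]
    (hNRC : ¬ Function.Surjective fun x : F => x ^ 2)
    {n : ℕ}
    (M : Submodule F (Matrix (Fin n) (Fin n) F))
    (hM : ∀ A ∈ M, A.Triangularizable)
    (s : Set (Matrix (Fin n) (Fin n) F))
    (hs : ∀ A ∈ s, A.rank ≤ 1 ∧ A.trace = 0)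
    (hspan : M = Submodule.span F s) :
    2 * Module.finrank F M ≤ n ^ 2 := by
  have hsM : ∀ A ∈ s, A ∈ M := fun A hA => hspan ▸ Submodule.subset_span hA
  have h1 : ∀ A ∈ s, ∀ B ∈ s, (A * B).trace = 0 := fun A hA B hB =>
    trace_mul_zero hNRC A B (hs A hA).1 (hs B hB).1 (hs A hA).2 (hs B hB).2
      fun t => hM _ (M.add_mem (hsM A hA) (M.smul_mem t (hsM B hB)))
  let φ : LinearMap.BilinForm F (Matrix (Fin n) (Fin n) F) :=
    (LinearMap.mul F (Matrix (Fin n) (Fin n) F)).compr₂ (Matrix.traceLinearMap (Fin n) F F)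
  have hφ : ∀ A B, φ A B = (A * B).trace := fun A B => rfl
  have h2 : ∀ A ∈ M, ∀ B ∈ M, φ A B = 0 := by
    intro A hA B hB
    rw [hspan] at hA hB
    induction hA, hB using Submodule.span_induction₂ with
    | mem_mem x y hx hy => exact h1 x hx y hy
    | zero_left => simp
    | zero_right => simp
    | add_left => simp_all
    | add_right => simp_all [mul_add]
    | smul_left => simp_all
    | smul_right => simp_all
  have hinj : Function.Injective φ := by
    intro A B h
    exact Matrix.ext_iff_trace_mul_right.2 fun X => LinearMap.congr_fun h X
  let ψ : M →ₗ[F] M.dualAnnihilator := LinearMap.codRestrict _ (LinearMap.comp φ M.subtype) (by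
    intro A
    rw [Submodule.mem_dualAnnihilator]
    exact fun B hB => h2 A A.2 B hB)
  have hψ : Function.Injective ψ := by
    intro A B h
    exact Subtype.ext (hinj (congrArg Subtype.val h))
  have h3 := LinearMap.finrank_le_finrank_of_injective hψ
  have h4 := Subspace.finrank_add_finrank_dualAnnihilator_eq M
  rw [Module.finrank_matrix] at h4
  simp at h4
  nlinarith
end

section
/- Let F be a field and M ∈ Mat_n(F) a regular Hessenberg matrix, i.e., m_{i,j} = 0 whenever i > j+1 and m_{j+1,j} ≠ 0 for all j ∈ {1,…,n−1}. Let r(t) ∈ F[t] be a monic polynomial of degree n whose coefficient of t^{n−1} equals −tr(M). Then there exists a row matrix R ∈ Mat_{1,n−1}(F) such that the matrix obtained from M by adding R to the entries (1,2),…,(1,n) of the first row has characteristic polynomial r(t). -/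
open Polynomial Matrix in
lemma aux_charpoly {F : Type*} [Field F] {n : ℕ} (hn : 0 < n)
    (M : Matrix (Fin n) (Fin n) F) (R : Fin n → F) :
    (M + Matrix.of fun i j : Fin n => if i = ⟨0, hn⟩ then R j else 0).charpoly
      = M.charpoly - ∑ j, C (R j) * (charmatrix M).adjugate j ⟨0, hn⟩ := by
  have h1 : charmatrix (M + Matrix.of fun i j : Fin n => if i = ⟨0, hn⟩ then R j else 0)
      = (charmatrix M).updateRow ⟨0, hn⟩
        ((charmatrix M) ⟨0, hn⟩ + (-1 : F[X]) • fun j => C (R j)) := by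
    ext1 i j
    by_cases hi : i = ⟨0, hn⟩
    · subst hi
      simp [charmatrix_apply]
      ring
    · simp [charmatrix_apply, hi, Matrix.updateRow_ne hi]
  have h2 : ((charmatrix M).updateRow ⟨0, hn⟩ (fun j => C (R j))).det
      = ∑ j, C (R j) * (charmatrix M).adjugate j ⟨0, hn⟩ := by
    rw [← cramer_transpose_apply, cramer_eq_adjugate_mulVec, ← adjugate_transpose]
    simp only [mulVec, dotProduct, transpose_apply]
    exact Finset.sum_congr rfl fun j _ => mul_comm _ _
  rw [Matrix.charpoly, h1, det_updateRow_add, det_updateRow_smul, h2, updateRow_eq_self,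
    Matrix.charpoly]
  ring

open Polynomial Matrix in
theorem aux_deg {F : Type*} [Field F] {n : ℕ} (hn : 0 < n)
    (M : Matrix (Fin n) (Fin n) F) (R : Fin n → F) :
    (∑ j, C (R j) * (charmatrix M).adjugate j ⟨0, hn⟩).degree < n := by
  have h := aux_charpoly hn M R
  set N := M + Matrix.of fun i j : Fin n => if i = ⟨0, hn⟩ then R j else 0
  have : ∑ j, C (R j) * (charmatrix M).adjugate j ⟨0, hn⟩ = M.charpoly - N.charpoly := by
    rw [h]; ring
  rw [this]
  have hM : M.charpoly.degree = n := by simp [charpoly_degree_eq_dim]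
  have hN : N.charpoly.degree = n := by simp [charpoly_degree_eq_dim]
  rw [← hM]
  apply degree_sub_lt (hM.trans hN.symm) (charpoly_monic M).ne_zero
  rw [(charpoly_monic M).leadingCoeff, (charpoly_monic N).leadingCoeff]

open Polynomial Matrix in
theorem aux_step {F : Type*} [Field F] {n : ℕ} (hn : 0 < n)
    (M : Matrix (Fin n) (Fin n) F) (R : Fin n → F)
    (h : ∑ j, C (R j) * (charmatrix M).adjugate j ⟨0, hn⟩ = 0) :
    R ⟨0, hn⟩ = 0 ∧ ∑ j, C ((R ᵥ* M) j) * (charmatrix M).adjugate j ⟨0, hn⟩ = 0 := by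
  have key : ∑ j, C ((R ᵥ* M) j) * (charmatrix M).adjugate j ⟨0, hn⟩
      = - (C (R ⟨0, hn⟩) * M.charpoly) := by
    have e : ∀ i, ∑ j, charmatrix M i j * (charmatrix M).adjugate j ⟨0, hn⟩
        = if i = ⟨0, hn⟩ then M.charpoly else 0 := by
      intro i
      rw [← Matrix.mul_apply, mul_adjugate]
      simp [Matrix.one_apply, Matrix.charpoly]
    have e' : ∀ i, X * (charmatrix M).adjugate i ⟨0, hn⟩
        - ∑ j, C (M i j) * (charmatrix M).adjugate j ⟨0, hn⟩
        = if i = ⟨0, hn⟩ then M.charpoly else 0 := by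
      intro i
      rw [← e i]
      simp [charmatrix_apply, sub_mul, Finset.sum_sub_distrib, Matrix.diagonal_apply]
    have e2 : ∑ i, C (R i) * (X * (charmatrix M).adjugate i ⟨0, hn⟩
        - ∑ j, C (M i j) * (charmatrix M).adjugate j ⟨0, hn⟩) = C (R ⟨0, hn⟩) * M.charpoly := by
      simp [e']
    rw [← e2]
    simp only [mul_sub, Finset.sum_sub_distrib]
    have e3 : ∑ i, C (R i) * (X * (charmatrix M).adjugate i ⟨0, hn⟩) = 0 := by
      simp_rw [mul_left_comm _ X]
      rw [← Finset.mul_sum, h, mul_zero]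
    rw [e3, zero_sub, neg_neg]
    simp only [vecMul, dotProduct, map_sum, map_mul, Finset.sum_mul, Finset.mul_sum, mul_assoc]
    exact Finset.sum_comm
  have hR : R ⟨0, hn⟩ = 0 := by
    by_contra h0
    have hd := aux_deg hn M (R ᵥ* M)
    rw [key, degree_neg, degree_C_mul h0, charpoly_degree_eq_dim] at hd
    simp at hd
  refine ⟨hR, ?_⟩
  rw [key, hR]; simp

open Polynomial Matrix in
theorem aux_inj {F : Type*} [Field F] {n : ℕ} (hn : 0 < n)
    (M : Matrix (Fin n) (Fin n) F)
    (hHess : ∀ i j : Fin n, (j : ℕ) + 1 < (i : ℕ) → M i j = 0)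
    (hreg : ∀ i j : Fin n, (i : ℕ) = (j : ℕ) + 1 → M i j ≠ 0) (k : ℕ) :
    ∀ R : Fin n → F, ∑ j, C (R j) * (charmatrix M).adjugate j ⟨0, hn⟩ = 0 →
      ∀ hk : k < n, R ⟨k, hk⟩ = 0 := by
  induction k using Nat.strong_induction_on with
  | _ k ih =>
    intro R h hk
    obtain ⟨h0, h1⟩ := aux_step hn M R h
    rcases k with _ | k
    · exact h0
    have h2 := ih k (Nat.lt_succ_self k) _ h1 (by omega)
    rw [vecMul, dotProduct, Finset.sum_eq_single ⟨k + 1, hk⟩] at h2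
    · exact (mul_eq_zero.1 h2).resolve_right (hreg _ _ rfl)
    · intro b _ hb
      rcases Nat.lt_or_ge (b : ℕ) (k + 1) with hlt | hge
      · rw [ih b hlt R h b.2, zero_mul]
      · have : (b : ℕ) ≠ k + 1 := fun hc => hb (Fin.ext hc)
        rw [hHess b ⟨k, _⟩ (by simp only; omega), mul_zero]
    · simp

open Polynomial Matrix in
theorem aux_surj {F : Type*} [Field F] {n : ℕ} (hn : 0 < n)
    (M : Matrix (Fin n) (Fin n) F)
    (hHess : ∀ i j : Fin n, (j : ℕ) + 1 < (i : ℕ) → M i j = 0)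
    (hreg : ∀ i j : Fin n, (i : ℕ) = (j : ℕ) + 1 → M i j ≠ 0) (p : F[X]) (hp : p.degree < n) :
    ∃ R : Fin n → F, ∑ j, C (R j) * (charmatrix M).adjugate j ⟨0, hn⟩ = p := by
  let T : (Fin n → F) →ₗ[F] degreeLT F n :=
    { toFun := fun R => ⟨∑ j, C (R j) * (charmatrix M).adjugate j ⟨0, hn⟩,
        mem_degreeLT.2 (aux_deg hn M R)⟩
      map_add' := by
        intro R S
        ext1
        simp [add_mul, Finset.sum_add_distrib]
      map_smul' := by
        intro c R
        ext1
        simp [Finset.smul_sum, smul_eq_C_mul, mul_assoc] }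
  have hT : Function.Injective T := by
    rw [injective_iff_map_eq_zero]
    intro R hR
    ext ⟨k, hk⟩
    exact aux_inj hn M hHess hreg k R (congrArg Subtype.val hR) hk
  let e := (degreeLTEquiv F n).toLinearMap ∘ₗ T
  have he : Function.Injective e := (degreeLTEquiv F n).injective.comp hT
  have hs : Function.Surjective e := LinearMap.injective_iff_surjective.1 he
  obtain ⟨R, hR⟩ := hs (degreeLTEquiv F n ⟨p, mem_degreeLT.2 hp⟩)
  have h3 : T R = ⟨p, mem_degreeLT.2 hp⟩ := (degreeLTEquiv F n).injective hR
  exact ⟨R, congrArg Subtype.val h3⟩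

theorem stmt_4 {F : Type*} [Field F] {n : ℕ} (hn : 0 < n)
    (M : Matrix (Fin n) (Fin n) F)
    (hHess : ∀ i j : Fin n, (j : ℕ) + 1 < (i : ℕ) → M i j = 0)
    (hreg : ∀ i j : Fin n, (i : ℕ) = (j : ℕ) + 1 → M i j ≠ 0)
    (r : Polynomial F) (hmonic : r.Monic) (hdeg : r.natDegree = n)
    (htr : r.coeff (n - 1) = - M.trace) :
    ∃ R : Fin n → F, R ⟨0, hn⟩ = 0 ∧
      (M + Matrix.of fun i j : Fin n =>
        if i = ⟨0, hn⟩ then R j else 0).charpoly = r := by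
  have hM : M.charpoly.degree = n := by simp [Matrix.charpoly_degree_eq_dim]
  have hr : r.degree = n := by rw [Polynomial.degree_eq_natDegree hmonic.ne_zero, hdeg]
  have hd : (M.charpoly - r).degree < n := by
    rw [← hM]
    apply Polynomial.degree_sub_lt (hM.trans hr.symm) (Matrix.charpoly_monic M).ne_zero
    rw [(Matrix.charpoly_monic M).leadingCoeff, hmonic.leadingCoeff]
  obtain ⟨R, hR⟩ := aux_surj hn M hHess hreg _ hd
  have hc : (M + Matrix.of fun i j : Fin n =>
        if i = ⟨0, hn⟩ then R j else 0).charpoly = r := by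
    rw [aux_charpoly, hR]; ring
  refine ⟨R, ?_, hc⟩
  haveI : Nonempty (Fin n) := ⟨⟨0, hn⟩⟩
  have ht := Matrix.trace_eq_neg_charpoly_coeff (M + Matrix.of fun i j : Fin n =>
        if i = ⟨0, hn⟩ then R j else 0)
  rw [hc, Fintype.card_fin, htr, neg_neg, Matrix.trace_add] at ht
  simpa [Matrix.trace] using ht
end

section
/- Let F be a field which is NRC (the squaring map on F is not surjective) and not a finite field of characteristic 2, and let n ≥ 1. Then every linear subspace S of Mat_n(F) in which every matrix is triangularizable over F satisfies dim S ≤ n(n+1)/2. Since the upper triangular matrices form such a space of dimension n(n+1)/2, the maximum t_n(F) equals n(n+1)/2. -/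
namespace TriSpace

open Module Polynomial

/-- An endomorphism annihilated by some nonzero split polynomial. -/
def Good {F V : Type*} [Field F] [AddCommGroup V] [Module F V] (f : End F V) : Prop :=
  ∃ p : F[X], p ≠ 0 ∧ p.Splits ∧ aeval f p = 0

lemma aeval_comm {F V W : Type*} [Field F] [AddCommGroup V] [Module F V]
    [AddCommGroup W] [Module F W] (π : V →ₗ[F] W) (f : End F V) (g : End F W)
    (h : ∀ v, π (f v) = g (π v)) (p : F[X]) (v : V) :
    π (aeval f p v) = aeval g p (π v) := by
  have hk : ∀ (k : ℕ) (v : V), π ((f ^ k) v) = (g ^ k) (π v) := by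
    intro k
    induction k with
    | zero => intro v; simp
    | succ k ih => intro v; rw [pow_succ, pow_succ]; simp [ih, h]
  induction p using Polynomial.induction_on' with
  | add p q hp hq => simp [hp, hq]
  | monomial k a => simp [aeval_monomial, Module.algebraMap_end_apply, hk]

lemma Good.descend {F V W : Type*} [Field F] [AddCommGroup V] [Module F V]
    [AddCommGroup W] [Module F W] (π : V →ₗ[F] W) (hπ : Function.Surjective π)
    (f : End F V) (g : End F W)
    (h : ∀ v, π (f v) = g (π v)) (hf : Good f) : Good g := by
  obtain ⟨p, h0, hs, hp⟩ := hf
  refine ⟨p, h0, hs, ?_⟩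
  ext w
  obtain ⟨v, rfl⟩ := hπ w
  rw [← aeval_comm π f g h, hp]
  simp

lemma Good.sq {F V : Type*} [Field F] [AddCommGroup V] [Module F V] {f : End F V}
    (hf : Good f) (a : F) (x : V) (hx : x ≠ 0) (h : f (f x) = a • x) : ∃ r : F, r ^ 2 = a := by
  obtain ⟨p, h0, hs, hp⟩ := hf
  by_contra hne
  push Not at hne
  have hirr : Irreducible (X ^ 2 - C a) := X_pow_sub_C_irreducible_of_prime Nat.prime_two hne
  have hq : aeval f (X ^ 2 - C a) x = 0 := by
    simp [pow_two, Module.algebraMap_end_apply, h]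
  by_cases hd : (X ^ 2 - C a) ∣ p
  · have hsp : (X ^ 2 - C a).Splits := hs.of_dvd h0 hd
    have hdeg : (X ^ 2 - C a : F[X]).degree = 2 := by
      simpa using degree_X_pow_sub_C (n := 2) (by norm_num) a
    obtain ⟨r, hr⟩ := hsp.exists_eval_eq_zero (by rw [hdeg]; norm_num)
    exact hne r (by simpa [sub_eq_zero] using hr)
  · obtain ⟨u, v, huv⟩ := (hirr.coprime_iff_not_dvd).2 hd
    apply hx
    have := congrArg (fun q => aeval f q x) huv
    simp only [map_add, map_mul, hp, mul_zero, add_zero, Module.End.mul_apply,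
      hq, map_zero, map_one, Module.End.one_apply] at this
    exact this.symm

/-- Two vectors whose attached functionals do not vanish on each other. -/
lemma exists_pair {F V : Type*} [Field F] [AddCommGroup V] [Module F V] [FiniteDimensional F V]
    [Nontrivial V] (φ : V → Dual F V) (h0 : ∀ x, x ≠ 0 → φ x ≠ 0) :
    ∃ x y, x ≠ 0 ∧ y ≠ 0 ∧ φ x y ≠ 0 ∧ φ y x ≠ 0 := by
  classical
  by_contra hcon
  push Not at hcon
  rcases finite_or_infinite F with hF | hF
  · have : Finite V := Module.finite_of_finite F
    have := Fintype.ofFinite V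
    have := Fintype.ofFinite F
    let N : Finset V := Finset.univ.filter (fun x => x ≠ 0)
    let Z : V → Finset V := fun x => N.filter (fun y => φ x y = 0)
    have hN : N.card + 1 = Fintype.card V := by
      have : N = Finset.univ.erase 0 := by ext; simp [N]
      rw [this, Finset.card_erase_of_mem (Finset.mem_univ _), Finset.card_univ]
      have := Fintype.card_pos (α := V)
      omega
    have hZ : ∀ x ∈ N, 2 * (Z x).card + 1 ≤ N.card := by
      intro x hx
      have hx0 : x ≠ 0 := by simpa [N] using hx
      have h1 : (Z x).card + 1 = Fintype.card (LinearMap.ker (φ x)) := by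
        have : Z x = (Finset.univ.filter (fun y => y ∈ LinearMap.ker (φ x))).erase 0 := by
          ext; simp [Z, N]
        rw [this, Finset.card_erase_of_mem (by simp), Fintype.card_subtype]
        have : 0 < (Finset.univ.filter (fun y => y ∈ LinearMap.ker (φ x))).card :=
          Finset.card_pos.2 ⟨0, by simp⟩
        omega
      have hr : Module.finrank F (LinearMap.ker (φ x)) + 1 = Module.finrank F V :=
        Module.Dual.finrank_ker_add_one_of_ne_zero (h0 x hx0)
      have h2 : Fintype.card V = Fintype.card (LinearMap.ker (φ x)) * Fintype.card F := by
        rw [Module.card_eq_pow_finrank (K := F) (V := V),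
          Module.card_eq_pow_finrank (K := F) (V := LinearMap.ker (φ x)), ← hr, pow_succ]
      have h3 : 2 ≤ Fintype.card F := Fintype.one_lt_card
      have h4 := Nat.mul_le_mul_left (Fintype.card (LinearMap.ker (φ x))) h3
      omega
    have hsub : N ×ˢ N ⊆ (N.sigma Z).image (fun s => (s.1, s.2)) ∪
        (N.sigma Z).image (fun s => (s.2, s.1)) := by
      rintro ⟨x, y⟩ hxy
      rw [Finset.mem_product] at hxy
      have hx0 : x ≠ 0 := by simpa [N] using hxy.1
      have hy0 : y ≠ 0 := by simpa [N] using hxy.2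
      rw [Finset.mem_union]
      by_cases h : φ x y = 0
      · left
        exact Finset.mem_image.2 ⟨⟨x, y⟩, by simp [Z, N, hx0, hy0, h], rfl⟩
      · right
        exact Finset.mem_image.2 ⟨⟨y, x⟩, by simp [Z, N, hx0, hy0, hcon x y hx0 hy0 h], rfl⟩
    have hc := Finset.card_le_card hsub
    have hu := Finset.card_union_le ((N.sigma Z).image (fun s => (s.1, s.2)))
      ((N.sigma Z).image (fun s => (s.2, s.1)))
    have hi1 := Finset.card_image_le (s := N.sigma Z) (f := fun s => (s.1, s.2))
    have hi2 := Finset.card_image_le (s := N.sigma Z) (f := fun s => (s.2, s.1))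
    rw [Finset.card_product] at hc
    have hs : 2 * (N.sigma Z).card + N.card ≤ N.card * N.card := by
      rw [Finset.card_sigma, Finset.mul_sum]
      calc _ = ∑ x ∈ N, (2 * (Z x).card + 1) := by
              rw [Finset.sum_add_distrib]; simp
        _ ≤ ∑ x ∈ N, N.card := Finset.sum_le_sum hZ
        _ = _ := by simp
    have hpos : 0 < N.card := by
      obtain ⟨v, hv⟩ := exists_ne (0 : V)
      exact Finset.card_pos.2 ⟨v, by simp [N, hv]⟩
    omega
  · let b := Module.finBasis F V
    have hu : (⋃ i ∈ (Finset.univ : Finset (Fin (Module.finrank F V))),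
        (LinearMap.ker (φ (b i)) : Set V)) ≠ Set.univ := by
      intro hU
      have := Subspace.top_mem_of_biUnion_eq_univ
        (s := Finset.univ.image fun i => LinearMap.ker (φ (b i))) (by simpa using hU)
      obtain ⟨i, -, hi⟩ := Finset.mem_image.1 this
      exact h0 (b i) (b.ne_zero i) (LinearMap.ker_eq_top.1 hi)
    obtain ⟨y, hy⟩ := (Set.ne_univ_iff_exists_notMem _).1 hu
    simp only [Finset.mem_univ, Set.iUnion_true, Set.mem_iUnion, SetLike.mem_coe,
      LinearMap.mem_ker, not_exists] at hy
    have hy0 : y ≠ 0 := by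
      rintro rfl
      have : Nonempty (Fin (Module.finrank F V)) := b.index_nonempty
      exact hy (Classical.arbitrary _) (map_zero _)
    refine h0 y hy0 (b.ext fun i => ?_)
    simpa using hcon (b i) y (b.ne_zero i) hy0 (hy i)

lemma exists_adapted {F V : Type*} [Field F] [AddCommGroup V] [Module F V]
    [FiniteDimensional F V] [Nontrivial V]
    (hNRC : ¬ Function.Surjective fun x : F => x ^ 2)
    (S : Submodule F (End F V)) (hS : ∀ f ∈ S, Good f) :
    ∃ x : V, x ≠ 0 ∧ ∀ φ : Dual F V, φ x = 0 → φ.smulRight x ∈ S → φ = 0 := by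
  classical
  by_contra hcon
  push Not at hcon
  choose! φ h1 h2 h3 using hcon
  obtain ⟨x, y, hx, hy, hxy, hyx⟩ := exists_pair φ h3
  apply hNRC
  intro a
  have hmem : (a / (φ x y * φ y x)) • (φ x).smulRight x + (φ y).smulRight y ∈ S :=
    S.add_mem (S.smul_mem _ (h2 x hx)) (h2 y hy)
  refine (hS _ hmem).sq a x hx ?_
  simp only [LinearMap.add_apply, LinearMap.smul_apply, LinearMap.smulRight_apply, h1 x hx,
    zero_smul, smul_zero, zero_add, map_smul, h1 y hy, add_zero, smul_smul]
  congr 1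
  field_simp

theorem bound {F : Type*} [Field F] (hNRC : ¬ Function.Surjective fun x : F => x ^ 2) (n : ℕ) :
    ∀ (V : Type _) [AddCommGroup V] [Module F V] [FiniteDimensional F V],
      Module.finrank F V = n → ∀ S : Submodule F (End F V), (∀ f ∈ S, Good f) →
      2 * Module.finrank F S ≤ n * (n + 1) := by
  induction n with
  | zero =>
    intro V _ _ _ hV S hS
    have h1 : Module.finrank F S ≤ Module.finrank F (End F V) := Submodule.finrank_le S
    rw [Module.finrank_linearMap, hV] at h1
    omega
  | succ n ih =>
    intro V _ _ _ hV S hS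
    have : Nontrivial V := Module.nontrivial_of_finrank_pos (R := F) (by omega)
    obtain ⟨x, hx, hadapt⟩ := exists_adapted hNRC S hS
    let ev : S →ₗ[F] V := (LinearMap.applyₗ x : End F V →ₗ[F] V).comp S.subtype
    have hrn := LinearMap.finrank_range_add_finrank_ker ev
    have hle : Module.finrank F (LinearMap.range ev) ≤ n + 1 := hV ▸ Submodule.finrank_le _
    obtain ⟨L, hLd⟩ : ∃ L : Submodule F V, L = F ∙ x := ⟨_, rfl⟩
    have hLx : ∀ f : LinearMap.ker ev, (f : S).1 x = 0 := fun f => f.2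
    have hL : ∀ f : LinearMap.ker ev, L ≤ L.comap (f : S).1 := by
      intro f
      conv_lhs => rw [hLd]
      rw [Submodule.span_singleton_le_iff_mem, Submodule.mem_comap, hLx f]
      exact L.zero_mem
    let q : LinearMap.ker ev →ₗ[F] (V ⧸ L →ₗ[F] V ⧸ L) :=
      { toFun := fun f => L.mapQ L (f : S).1 (hL f)
        map_add' := by intro f g; ext v; simp
        map_smul' := by intro c f; ext v; simp }
    have hq : Function.Injective q := by
      suffices key : ∀ f, q f = 0 → f = 0 by
        intro f g h
        have h1 : q (f + (-1 : F) • g) = 0 := by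
          rw [LinearMap.map_add, LinearMap.map_smul, h]
          ext v
          simp
        have h2 := key _ h1
        apply Subtype.ext
        apply Subtype.ext
        have h3 : (f : S).1 + (-1 : F) • (g : S).1 = 0 :=
          congrArg (fun t : LinearMap.ker ev => ((t : S) : End F V)) h2
        ext v
        have h4 := LinearMap.congr_fun h3 v
        simp only [LinearMap.zero_apply, neg_one_smul, ← sub_eq_add_neg] at h4
        exact sub_eq_zero.1 h4
      intro f hf
      have hr : ∀ v, ∃ c : F, c • x = (f : S).1 v := by
        intro v
        have := LinearMap.congr_fun hf (L.mkQ v)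
        have h2 : L.mkQ ((f : S).1 v) = 0 := this
        rw [Submodule.mkQ_apply, Submodule.Quotient.mk_eq_zero, hLd] at h2
        exact Submodule.mem_span_singleton.1 h2
      choose c hc using hr
      have hinj : ∀ a b : F, a • x = b • x → a = b := fun a b h => smul_left_injective F hx h
      let φ : Dual F V :=
        { toFun := c
          map_add' := fun u v => hinj _ _ (by rw [hc, add_smul, hc, hc, map_add])
          map_smul' := fun a v => hinj _ _ (by
            rw [hc, map_smul, RingHom.id_apply, smul_eq_mul, mul_smul, hc]) }
      have hφ : φ.smulRight x = (f : S).1 := by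
        ext v
        exact hc v
      have hz : φ = 0 := by
        apply hadapt
        · exact hinj _ _ (by rw [show φ x • x = (f : S).1 x from hc x, hLx f, zero_smul])
        · rw [hφ]; exact (f : S).2
      apply Subtype.ext
      apply Subtype.ext
      rw [← hφ, hz]
      ext v
      simp
    have hfr : Module.finrank F (V ⧸ L) = n := by
      have h1 := L.finrank_quotient_add_finrank
      have h2 : Module.finrank F L = 1 := hLd ▸ finrank_span_singleton hx
      omega
    have hI := ih (V ⧸ L) hfr (LinearMap.range q) (by
      rintro _ ⟨f, rfl⟩
      exact Good.descend L.mkQ L.mkQ_surjective (f : S).1 _ (fun v => rfl) (hS _ (f : S).2))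
    rw [LinearMap.finrank_range_of_inj hq] at hI
    nlinarith

lemma good_of_triangularizable {F : Type*} [Field F] {n : ℕ} {M : Matrix (Fin n) (Fin n) F}
    (h : M.Triangularizable) : Good (Matrix.toLinAlgEquiv' M) := by
  obtain ⟨P, hP⟩ := h
  refine ⟨M.charpoly, (Matrix.charpoly_monic M).ne_zero, ?_, ?_⟩
  · rw [← Matrix.charpoly_units_conj P M, ← Matrix.coe_units_inv,
      Matrix.charpoly_of_isUpperTriangular _ hP]
    exact Polynomial.Splits.prod fun i _ => Polynomial.Splits.X_sub_C _
  · have := Polynomial.aeval_algHom_apply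
      (Matrix.toLinAlgEquiv' (R := F) (n := Fin n)).toAlgHom M M.charpoly
    rw [Matrix.aeval_self_charpoly, map_zero] at this
    exact this

lemma card_le_pairs (n : ℕ) :
    Fintype.card {p : Fin n × Fin n // p.1 ≤ p.2} * 2 = n * (n + 1) := by
  have e : {p : Fin n × Fin n // p.1 ≤ p.2} ≃ (Σ j : Fin n, {i : Fin n // i ≤ j}) :=
    { toFun := fun p => ⟨p.1.2, p.1.1, p.2⟩
      invFun := fun s => ⟨(s.2.1, s.1), s.2.2⟩
      left_inv := fun _ => rfl
      right_inv := fun _ => rfl }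
  rw [Fintype.card_congr e, Fintype.card_sigma]
  have : ∀ j : Fin n, Fintype.card {i : Fin n // i ≤ j} = (j : ℕ) + 1 := by
    intro j
    rw [Fintype.card_subtype]
    rw [← Fin.card_Iic j]
    congr 1
    ext i
    simp
  simp only [this]
  rw [Fin.sum_univ_eq_sum_range (fun i => i + 1) n]
  have h := Finset.sum_range_id_mul_two (n + 1)
  rw [Finset.sum_range_succ'] at h
  simp only [add_zero, Nat.add_sub_cancel] at h
  rw [h]; ring

/-- The space of upper triangular matrices. -/
def upper (F : Type*) [Field F] (n : ℕ) : Submodule F (Matrix (Fin n) (Fin n) F) where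
  carrier := {M | M.BlockTriangular id}
  add_mem' := fun h1 h2 => h1.add h2
  zero_mem' := Matrix.blockTriangular_zero
  smul_mem' := fun c M h i j hij => by simp [h hij]

/-- Coordinates on upper triangular matrices. -/
def upperEquiv (F : Type*) [Field F] (n : ℕ) :
    upper F n ≃ₗ[F] ({p : Fin n × Fin n // p.1 ≤ p.2} → F) where
  toFun M p := M.1 p.1.1 p.1.2
  map_add' _ _ := rfl
  map_smul' _ _ := rfl
  invFun g := ⟨fun i j => if h : i ≤ j then g ⟨(i, j), h⟩ else 0, fun i j hij => by
    have hij' : j < i := hij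
    simp [not_le.2 hij']⟩
  left_inv M := by
    apply Subtype.ext
    ext i j
    by_cases h : i ≤ j
    · simp [h]
    · simpa [h] using (M.2 (not_le.1 h)).symm
  right_inv g := by
    ext p
    simp [p.2]

lemma finrank_upper (F : Type*) [Field F] (n : ℕ) :
    Module.finrank F (upper F n) = n * (n + 1) / 2 := by
  rw [(upperEquiv F n).finrank_eq, Module.finrank_fintype_fun_eq_card]
  have := card_le_pairs n
  omega

end TriSpace


theorem stmt_19 {F : Type*} [Field F]
    (hNRC : ¬ Function.Surjective fun x : F => x ^ 2)
    (hfin2 : ¬ (Finite F ∧ ringChar F = 2))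
    {n : ℕ} (hn : 1 ≤ n) :
    (∀ S : Submodule F (Matrix (Fin n) (Fin n) F),
      (∀ M ∈ S, M.Triangularizable) → Module.finrank F S ≤ n * (n + 1) / 2) ∧
    (∃ S : Submodule F (Matrix (Fin n) (Fin n) F),
      (∀ M ∈ S, M.Triangularizable) ∧ Module.finrank F S = n * (n + 1) / 2) := by
  refine ⟨fun S hS => ?_, TriSpace.upper F n, fun M hM => ⟨1, by
    have h : M.BlockTriangular id := hM
    simpa using h⟩,
    TriSpace.finrank_upper F n⟩
  let e := (Matrix.toLinAlgEquiv' (R := F) (n := Fin n)).toLinearEquiv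
  have h := TriSpace.bound hNRC n (Fin n → F) (by simp) (S.map e.toLinearMap) (by
    rintro _ ⟨M, hM, rfl⟩
    exact TriSpace.good_of_triangularizable (hS M hM))
  have h2 : Module.finrank F (S.map e.toLinearMap) = Module.finrank F S :=
    LinearEquiv.finrank_map_eq e S
  rw [h2] at h
  omega
end
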